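/- Assume the set A_ω = { ∑ᵢ ω i • xᵢ : xᵢ ∈ Mᵢ^⊥ for all i, ∑ᵢ ω i ‖xᵢ‖² < ∞ } is not closed in H. Then there exists a dense linear subspace Y ⊆ H such that the simultaneous projection method converges super-polynomially fast on Y: for every y ∈ Y and every integer n ≥ 1, k^n · ‖T_ω^k y − P_M y‖ → 0 as k → ∞. -/

import Mathlib

open RealInnerProductSpace

/-!
`T_ω` satisfies `0 ≤ T_ω ≤ 1` in the Loewner order, and `ker (1 - T_ω) = ⨅ i, M i`.

For any operator `0 ≤ T ≤ 1` the operators `T ^ j * (1 - T)` decrease in `j` and telescope, so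
`(k + 1) • (T ^ k * (1 - T)) ≤ ∑ j ≤ k, T ^ j * (1 - T) = 1 - T ^ (k + 1) ≤ 1`. Taking `m`-th
powers, `T ^ k * (1 - T) ^ m` has norm `O(k ^ (-m))`, so that `T ^ k y → 0` super-polynomially fast
as soon as `y` lies in the range of every power of `1 - T`.

Such `y`, together with the fixed vectors, span a dense subspace: for a normal operator `A`, the
ranges of `A` and `A ^ 2` have the same closure, and a Mittag-Leffler argument then shows that
`⨅ m, range (A ^ m)` is dense in `range A`.
-/

section MittagLeffler

open Filter Topology Set

variable {X : Type*} [MetricSpace X] {f : X → X} {s : Set X}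

theorem exists_mem_forall_le_dist_iterate_lt (hf : Continuous f) (hs : s ⊆ closure (f '' s))
    (n : ℕ) {x : X} (hx : x ∈ s) {ε : ℝ} (hε : 0 < ε) :
    ∃ y ∈ s, ∀ j ≤ n, dist (f^[j] x) (f^[j] (f y)) < ε := by
  have hnear : ∀ᶠ z in 𝓝 x, ∀ j ∈ Iic n, dist (f^[j] x) (f^[j] z) < ε := by
    refine (eventually_all_finite (finite_Iic n)).2 fun j _ ↦ ?_
    have htendsto := ((hf.iterate j).tendsto x).eventually (Metric.ball_mem_nhds _ hε)
    filter_upwards [htendsto] with z hz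
    rwa [dist_comm]
  obtain ⟨_, ⟨y, hy, rfl⟩, hclose⟩ :=
    ((mem_closure_iff_frequently.1 (hs hx)).and_eventually hnear).exists
  exact ⟨y, hy, hclose⟩

theorem exists_seq_dist_iterate_lt (hf : Continuous f) (hs : s ⊆ closure (f '' s))
    {x : X} (hx : x ∈ s) {ε : ℕ → ℝ} (hε : ∀ n, 0 < ε n) :
    ∃ u : ℕ → X, u 0 = x ∧ ∀ n, ∀ j ≤ n, dist (f^[j] (u n)) (f^[j + 1] (u (n + 1))) < ε n := by
  have hstep (n : ℕ) (y : s) :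
      ∃ z : s, ∀ j ≤ n, dist (f^[j] (y : X)) (f^[j + 1] (z : X)) < ε n := by
    obtain ⟨z, hz, hyz⟩ := exists_mem_forall_le_dist_iterate_lt hf hs n y.2 (hε n)
    exact ⟨⟨z, hz⟩, hyz⟩
  choose next hnext using hstep
  let u : ℕ → s := fun n ↦ n.rec ⟨x, hx⟩ next
  exact ⟨((↑) : s → X) ∘ u, rfl, fun n ↦ hnext n (u n)⟩

theorem subset_closure_iInter_range_iterate [CompleteSpace X] (hf : Continuous f)
    (hs : s ⊆ closure (f '' s)) : s ⊆ closure (⋂ m, range f^[m]) := by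
  intro x hx
  refine Metric.mem_closure_iff.2 fun ε hε ↦ ?_
  obtain ⟨u, rfl, hu⟩ := exists_seq_dist_iterate_lt hf hs hx
    (ε := fun n ↦ ε / 2 / 2 / 2 ^ n) fun n ↦ by positivity
  have hdist (m n : ℕ) : dist (f^[n] (u (n + m))) (f^[n + 1] (u (n + 1 + m))) ≤
      ε / 2 / 2 / 2 ^ n := by
    calc dist (f^[n] (u (n + m))) (f^[n + 1] (u (n + 1 + m)))
        ≤ ε / 2 / 2 / 2 ^ (n + m) := by
          rw [add_right_comm]
          exact (hu (n + m) n (Nat.le_add_right n m)).le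
      _ ≤ ε / 2 / 2 / 2 ^ n := by
          gcongr
          · exact one_le_two
          · exact Nat.le_add_right n m
  have hlim (m : ℕ) : ∃ z, Tendsto (fun n ↦ f^[n] (u (n + m))) atTop (𝓝 z) :=
    cauchySeq_tendsto_of_complete (cauchySeq_of_le_geometric_two (hdist m))
  choose z hz using hlim
  refine ⟨z 0, mem_iInter.2 fun m ↦ ⟨z m, ?_⟩, ?_⟩
  · have hshift : Tendsto (fun n ↦ f^[m] (f^[n] (u (n + m)))) atTop (𝓝 (z 0)) := by
      refine ((tendsto_add_atTop_iff_nat m).2 (hz 0)).congr fun n ↦ ?_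
      rw [add_zero, add_comm n m, Function.iterate_add_apply]
    exact tendsto_nhds_unique (((hf.iterate m).tendsto _).comp (hz m)) hshift
  · exact (dist_le_of_le_geometric_two_of_tendsto₀ (hdist 0) (hz 0)).trans_lt (half_lt_self hε)

end MittagLeffler

section NormalOperator

open ContinuousLinearMap

variable {𝕜 H : Type*} [RCLike 𝕜] [NormedAddCommGroup H] [InnerProductSpace 𝕜 H] [CompleteSpace H]
  {A : H →L[𝕜] H}

theorem topologicalClosure_range_mul_self (hA : IsStarNormal A) :
    (A * A).range.topologicalClosure = A.range.topologicalClosure := by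
  have horth : (A * A).rangeᗮ = A.rangeᗮ := by
    ext x
    rw [orthogonal_range, orthogonal_range, ← ker_self_comp_adjoint A]
    change adjoint (A ∘L A) x = 0 ↔ A (adjoint A x) = 0
    rw [adjoint_comp, comp_apply, hA.adjoint_apply_eq_zero_iff]
  rw [← Submodule.orthogonal_orthogonal_eq_closure, horth,
    Submodule.orthogonal_orthogonal_eq_closure]

theorem range_le_topologicalClosure_iInf_range_pow (hA : IsStarNormal A) :
    A.range ≤ (⨅ m : ℕ, (A ^ m).range).topologicalClosure := by
  have hself : (A.range : Set H) ⊆ closure (A '' A.range) := by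
    have himage : A '' A.range = (A * A).range := by
      ext x
      simp
    rw [himage, ← Submodule.topologicalClosure_coe, topologicalClosure_range_mul_self hA]
    exact Submodule.le_topologicalClosure _
  have hiInter : (⋂ m, Set.range A^[m]) = ((⨅ m : ℕ, (A ^ m).range : Submodule 𝕜 H) : Set H) := by
    simp only [← FunLike.coe_pow_eq_iterate, Submodule.coe_iInf, LinearMap.coe_range, coe_coe]
  rw [← SetLike.coe_subset_coe, Submodule.topologicalClosure_coe, ← hiInter]
  exact subset_closure_iInter_range_iterate A.continuous hself

theorem dense_ker_sup_iInf_range_pow (hA : IsStarNormal A) :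
    Dense ((A.ker ⊔ ⨅ m : ℕ, (A ^ m).range : Submodule 𝕜 H) : Set H) := by
  rw [Submodule.dense_iff_topologicalClosure_eq_top, Submodule.topologicalClosure_eq_top_iff,
    ← Submodule.inf_orthogonal, eq_bot_iff]
  calc A.kerᗮ ⊓ (⨅ m : ℕ, (A ^ m).range)ᗮ
      ≤ A.kerᗮ ⊓ A.rangeᗮ := by
        gcongr
        rw [← Submodule.orthogonal_closure (⨅ m : ℕ, (A ^ m).range)]
        exact Submodule.orthogonal_le (range_le_topologicalClosure_iInf_range_pow hA)
    _ = A.kerᗮ ⊓ A.ker := by rw [hA.orthogonal_range]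
    _ = ⊥ := by rw [inf_comm, Submodule.inf_orthogonal_eq_bot]

end NormalOperator

section PositiveContraction

open Filter Topology ContinuousLinearMap

variable {𝕜 H : Type*} [RCLike 𝕜] [NormedAddCommGroup H] [InnerProductSpace 𝕜 H] [CompleteSpace H]
  {S T : H →L[𝕜] H}

theorem commute_self_one_sub {R : Type*} [Ring R] (a : R) : Commute a (1 - a) :=
  (Commute.one_right a).sub_right (Commute.refl a)

theorem isPositive_conj (hT : T.IsPositive) (hS : IsSelfAdjoint S) : (S * T * S).IsPositive := by
  simpa [hS.adjoint_eq, mul_def, comp_assoc] using hT.adjoint_conj S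

theorem isPositive_mul_one_sub (hT : T.IsPositive) (hT' : (1 - T).IsPositive) :
    (T * (1 - T)).IsPositive := by
  have hsum : T * (1 - T) = T * (1 - T) * T + (1 - T) * T * (1 - T) := by noncomm_ring
  rw [hsum]
  exact (isPositive_conj hT' hT.isSelfAdjoint).add (isPositive_conj hT hT'.isSelfAdjoint)

theorem opNorm_le_one_of_isPositive (hT : T.IsPositive) (hT' : (1 - T).IsPositive) : ‖T‖ ≤ 1 := by
  refine T.opNorm_le_bound zero_le_one fun x ↦ ?_
  have hsq : RCLike.re (inner 𝕜 (T (T x)) x) ≤ RCLike.re (inner 𝕜 (T x) x) := by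
    have := (isPositive_mul_one_sub hT hT').re_inner_nonneg_left x
    simpa [inner_sub_left] using this
  have hle : RCLike.re (inner 𝕜 (T x) x) ≤ ‖x‖ ^ 2 := by
    have := hT'.re_inner_nonneg_left x
    simpa [inner_sub_left, inner_self_eq_norm_sq] using this
  rw [one_mul, ← sq_le_sq₀ (norm_nonneg _) (norm_nonneg _)]
  calc ‖T x‖ ^ 2 = RCLike.re (inner 𝕜 (T (T x)) x) := by
        rw [hT.inner_left_eq_inner_right, inner_self_eq_norm_sq]
    _ ≤ ‖x‖ ^ 2 := hsq.trans hle

theorem isPositive_pow (hT : T.IsPositive) (n : ℕ) : (T ^ n).IsPositive := by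
  induction n using Nat.twoStepInduction with
  | zero => simp
  | one => simpa using hT
  | more n ih _ =>
    rw [pow_succ, pow_succ']
    exact isPositive_conj ih hT.isSelfAdjoint

theorem isPositive_pow_mul_one_sub (hT : T.IsPositive) (hT' : (1 - T).IsPositive) (n : ℕ) :
    (T ^ n * (1 - T)).IsPositive := by
  induction n using Nat.twoStepInduction with
  | zero => simpa using hT'
  | one => simpa using isPositive_mul_one_sub hT hT'
  | more n ih _ =>
    have hconj : T ^ (n + 2) * (1 - T) = T * (T ^ n * (1 - T)) * T := by
      rw [pow_succ' T (n + 1), pow_succ, mul_assoc, mul_assoc, mul_assoc, mul_assoc,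
        (commute_self_one_sub T).eq]
    rw [hconj]
    exact isPositive_conj ih hT.isSelfAdjoint

theorem isPositive_one_sub_pow (hT : T.IsPositive) (hT' : (1 - T).IsPositive) (n : ℕ) :
    (1 - T ^ n).IsPositive := by
  rw [← geom_sum_mul_neg, Finset.sum_mul]
  exact isPositive_sum _ fun j _ ↦ isPositive_pow_mul_one_sub hT hT' j

theorem antitone_pow_mul_one_sub (hT : T.IsPositive) (hT' : (1 - T).IsPositive) :
    Antitone fun n : ℕ ↦ T ^ n * (1 - T) := by
  refine antitone_nat_of_succ_le fun n ↦ ?_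
  have hcomm : Commute (T ^ n) (1 - T) := (commute_self_one_sub T).pow_left n
  have hdiff : T ^ n * (1 - T) - T ^ (n + 1) * (1 - T) = (1 - T) * T ^ n * (1 - T) := by
    rw [← hcomm.eq, pow_succ]
    noncomm_ring
  rw [ContinuousLinearMap.le_def, hdiff]
  exact isPositive_conj (isPositive_pow hT n) hT'.isSelfAdjoint

theorem add_one_mul_norm_pow_mul_one_sub_le (hT : T.IsPositive) (hT' : (1 - T).IsPositive) (k : ℕ) :
    (k + 1) * ‖T ^ k * (1 - T)‖ ≤ 1 := by
  have hpos : ((k + 1) • (T ^ k * (1 - T))).IsPositive := by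
    rw [← Finset.card_range (k + 1), ← Finset.sum_const]
    exact isPositive_sum _ fun _ _ ↦ isPositive_pow_mul_one_sub hT hT' k
  have hle : (1 - (k + 1) • (T ^ k * (1 - T))).IsPositive := by
    have htelescope : 1 - (k + 1) • (T ^ k * (1 - T)) = T ^ (k + 1) +
        ∑ j ∈ Finset.range (k + 1), (T ^ j * (1 - T) - T ^ k * (1 - T)) := by
      rw [Finset.sum_sub_distrib, ← Finset.sum_mul, geom_sum_mul_neg, Finset.sum_const,
        Finset.card_range]
      abel
    rw [htelescope]
    refine (isPositive_pow hT _).add (isPositive_sum _ fun j hj ↦ ?_)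
    exact antitone_pow_mul_one_sub hT hT' (Finset.mem_range_succ_iff.1 hj)
  have hnorm := opNorm_le_one_of_isPositive hpos hle
  rwa [RCLike.norm_nsmul 𝕜, nsmul_eq_mul, Nat.cast_add_one] at hnorm

theorem pow_mul_norm_pow_mul_one_sub_pow_le (hT : T.IsPositive) (hT' : (1 - T).IsPositive)
    (k m : ℕ) : (k : ℝ) ^ m * ‖T ^ k * (1 - T) ^ m‖ ≤ (m : ℝ) ^ m := by
  have hpow (n : ℕ) : ‖T ^ n‖ ≤ 1 :=
    opNorm_le_one_of_isPositive (isPositive_pow hT n) (isPositive_one_sub_pow hT hT' n)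
  obtain rfl | hm := m.eq_zero_or_pos
  · simpa using hpow k
  set q := k / m
  have hk : (k : ℝ) ≤ m * (q + 1) := mod_cast (Nat.lt_mul_div_succ k hm).le
  have hcomm : Commute (T ^ q) (1 - T) := (commute_self_one_sub T).pow_left q
  have hsplit : T ^ k * (1 - T) ^ m = T ^ (k % m) * (T ^ q * (1 - T)) ^ m := by
    rw [hcomm.mul_pow, ← pow_mul, ← mul_assoc, ← pow_add, mul_comm q, Nat.mod_add_div]
  have hnorm : ‖T ^ k * (1 - T) ^ m‖ ≤ ‖T ^ q * (1 - T)‖ ^ m := by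
    rw [hsplit]
    calc ‖T ^ (k % m) * (T ^ q * (1 - T)) ^ m‖
        ≤ ‖T ^ (k % m)‖ * ‖(T ^ q * (1 - T)) ^ m‖ := norm_mul_le _ _
      _ ≤ 1 * ‖T ^ q * (1 - T)‖ ^ m := by
        gcongr
        exacts [hpow _, norm_pow_le' _ hm]
      _ = ‖T ^ q * (1 - T)‖ ^ m := one_mul _
  calc (k : ℝ) ^ m * ‖T ^ k * (1 - T) ^ m‖
      ≤ (m * (q + 1)) ^ m * ‖T ^ q * (1 - T)‖ ^ m := by gcongr
    _ = m ^ m * ((q + 1) * ‖T ^ q * (1 - T)‖) ^ m := by simp only [mul_pow, mul_assoc]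
    _ ≤ m ^ m * 1 ^ m := by
        gcongr
        exact add_one_mul_norm_pow_mul_one_sub_le hT hT' q
    _ = (m : ℝ) ^ m := by rw [one_pow, mul_one]

theorem tendsto_pow_mul_norm_pow_apply (hT : T.IsPositive) (hT' : (1 - T).IsPositive) {y : H}
    (hy : y ∈ ⨅ m : ℕ, ((1 - T) ^ m).range) (n : ℕ) :
    Tendsto (fun k : ℕ ↦ (k : ℝ) ^ n * ‖(T ^ k) y‖) atTop (𝓝 0) := by
  obtain ⟨z, rfl⟩ := (Submodule.mem_iInf _).1 hy (n + 1)
  set C : ℝ := ((n + 1 : ℕ) : ℝ) ^ (n + 1) * ‖z‖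
  have hbound (k : ℕ) : (k : ℝ) ^ (n + 1) * ‖(T ^ k) (((1 - T) ^ (n + 1)) z)‖ ≤ C :=
    calc (k : ℝ) ^ (n + 1) * ‖(T ^ k) (((1 - T) ^ (n + 1)) z)‖
        ≤ (k : ℝ) ^ (n + 1) * (‖T ^ k * (1 - T) ^ (n + 1)‖ * ‖z‖) := by
          gcongr
          exact (T ^ k * (1 - T) ^ (n + 1)).le_opNorm z
      _ ≤ C := by
          rw [← mul_assoc]
          exact mul_le_mul_of_nonneg_right (pow_mul_norm_pow_mul_one_sub_pow_le hT hT' k (n + 1))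
            (norm_nonneg z)
  refine squeeze_zero' (.of_forall fun k ↦ by positivity) ?_
    (tendsto_const_div_atTop_nhds_zero_nat C)
  filter_upwards [eventually_gt_atTop 0] with k hk
  rw [le_div_iff₀ (Nat.cast_pos.2 hk), mul_right_comm, ← pow_succ]
  exact hbound k

theorem tendsto_pow_mul_norm_pow_apply_sub_starProjection (hT : T.IsPositive)
    (hT' : (1 - T).IsPositive) {y : H} (hy : y ∈ (1 - T).ker ⊔ ⨅ m : ℕ, ((1 - T) ^ m).range)
    (n : ℕ) :
    Tendsto (fun k : ℕ ↦ (k : ℝ) ^ n * ‖(T ^ k) y - (1 - T).ker.starProjection y‖)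
      atTop (𝓝 0) := by
  obtain ⟨a, ha, b, hb, rfl⟩ := Submodule.mem_sup.1 hy
  have hfix (k : ℕ) : (T ^ k) a = a := by
    have hTa : T a = a := (sub_eq_zero.1 (show a - T a = 0 from ha)).symm
    rw [FunLike.coe_pow_eq_iterate, Function.iterate_fixed hTa]
  have hproj : (1 - T).ker.starProjection b = 0 := by
    rw [Submodule.starProjection_apply_eq_zero_iff,
      ← hT'.isSelfAdjoint.isStarNormal.orthogonal_range]
    refine Submodule.le_orthogonal_orthogonal _ ?_
    simpa using (Submodule.mem_iInf _).1 hb 1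
  refine (tendsto_pow_mul_norm_pow_apply hT hT' hb n).congr fun k ↦ ?_
  rw [map_add, map_add, hfix, hproj, Submodule.starProjection_eq_self_iff.2 ha, add_zero,
    add_sub_cancel_left]

end PositiveContraction

section SimultaneousProjection

open Filter Topology

variable {𝕜 H ι : Type*} [RCLike 𝕜] [NormedAddCommGroup H] [InnerProductSpace 𝕜 H] [CompleteSpace H]
  {ω : ι → ℝ} {M : ι → Submodule 𝕜 H} [∀ i, (M i).HasOrthogonalProjection]

/-- The simultaneous projection operator `T_ω = ∑ᵢ ω i • P_{M i}`, as a series in operator norm. It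
converges for every summable `ω`, and is `0` by convention if the series does not converge. -/
noncomputable def simultaneousProjection (ω : ι → ℝ) (M : ι → Submodule 𝕜 H)
    [∀ i, (M i).HasOrthogonalProjection] : H →L[𝕜] H :=
  ∑' i, (ω i : 𝕜) • (M i).starProjection

theorem hasSum_simultaneousProjection (hω : Summable ω) :
    HasSum (fun i ↦ (ω i : 𝕜) • (M i).starProjection) (simultaneousProjection ω M) := by
  refine (Summable.of_norm_bounded hω.norm fun i ↦ ?_).hasSum
  rw [norm_smul, RCLike.norm_ofReal, ← Real.norm_eq_abs]
  exact mul_le_of_le_one_right (norm_nonneg _) (M i).starProjection_norm_le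

theorem hasSum_simultaneousProjection_apply (hω : Summable ω) (x : H) :
    HasSum (fun i ↦ (ω i : 𝕜) • (M i).starProjection x) (simultaneousProjection ω M x) :=
  (hasSum_simultaneousProjection hω).mapL (ContinuousLinearMap.apply 𝕜 H x)

theorem hasSum_re_inner_simultaneousProjection (hω : Summable ω) (x : H) :
    HasSum (fun i ↦ ω i * ‖(M i).starProjection x‖ ^ 2)
      (RCLike.re (inner 𝕜 (simultaneousProjection ω M x) x)) := by
  have hsum := RCLike.hasSum_re _
    ((hasSum_simultaneousProjection_apply (M := M) hω x).mapL (innerSLFlip 𝕜 x))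
  refine hsum.congr_fun fun i ↦ ?_
  simp [Submodule.re_inner_starProjection_eq_normSq]

theorem isSelfAdjoint_simultaneousProjection :
    IsSelfAdjoint (simultaneousProjection ω M) := by
  simp only [IsSelfAdjoint, simultaneousProjection, tsum_star, star_smul, RCLike.star_def,
    RCLike.conj_ofReal, isSelfAdjoint_starProjection _ |>.star_eq]

theorem isPositive_simultaneousProjection (hω : ∀ i, 0 ≤ ω i) (hsum : Summable ω) :
    (simultaneousProjection ω M).IsPositive :=
  ContinuousLinearMap.isPositive_def'.2 ⟨isSelfAdjoint_simultaneousProjection, fun x ↦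
    (hasSum_re_inner_simultaneousProjection hsum x).nonneg fun i ↦
      mul_nonneg (hω i) (sq_nonneg _)⟩

theorem ker_simultaneousProjection (hω : ∀ i, 0 < ω i) (hsum : Summable ω) :
    (simultaneousProjection ω M).ker = ⨅ i, (M i)ᗮ := by
  ext x
  simp only [Submodule.mem_iInf, ← Submodule.starProjection_apply_eq_zero_iff]
  refine ⟨fun hx i ↦ ?_, fun hx ↦ ?_⟩
  · have hzero := hasSum_re_inner_simultaneousProjection (M := M) hsum x
    rw [show simultaneousProjection ω M x = 0 from hx, inner_zero_left, map_zero,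
      hasSum_zero_iff_of_nonneg fun i ↦ mul_nonneg (hω i).le (sq_nonneg _)] at hzero
    simpa [(hω i).ne'] using congrFun hzero i
  · have happly := hasSum_simultaneousProjection_apply (M := M) hsum x
    simp only [hx, smul_zero] at happly
    exact happly.unique hasSum_zero

theorem one_sub_simultaneousProjection (hω : HasSum ω 1) :
    1 - simultaneousProjection ω M = simultaneousProjection ω fun i ↦ (M i)ᗮ := by
  have hone : HasSum (fun i ↦ (ω i : 𝕜) • (1 : H →L[𝕜] H)) 1 := by
    simpa using ((RCLike.hasSum_ofReal 𝕜).2 hω).smul_const (1 : H →L[𝕜] H)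
  refine (hone.sub (hasSum_simultaneousProjection hω.summable)).unique ?_
  simpa only [Submodule.starProjection_orthogonal', smul_sub] using
    hasSum_simultaneousProjection (M := fun i ↦ (M i)ᗮ) hω.summable

theorem ker_one_sub_simultaneousProjection (hω : ∀ i, 0 < ω i) (hsum : HasSum ω 1) :
    (1 - simultaneousProjection ω M).ker = ⨅ i, M i := by
  simp only [one_sub_simultaneousProjection hsum, ker_simultaneousProjection hω hsum.summable,
    Submodule.orthogonal_orthogonal]

end SimultaneousProjection

theorem stmt_18_general {𝕜 H ι : Type*} [RCLike 𝕜] [NormedAddCommGroup H] [InnerProductSpace 𝕜 H]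
    [CompleteSpace H] (ω : ι → ℝ) (hω : ∀ i, 0 < ω i) (hωsum : HasSum ω 1)
    (M : ι → Submodule 𝕜 H) [∀ i, (M i).HasOrthogonalProjection]
    [(⨅ i, M i).HasOrthogonalProjection] :
    ∃ Y : Submodule 𝕜 H, Dense (Y : Set H) ∧ ∀ y ∈ Y, ∀ n : ℕ,
      Filter.Tendsto
        (fun k : ℕ ↦ (k : ℝ) ^ n *
          ‖(fun z : H ↦ ∑' i, (ω i : 𝕜) • (M i).starProjection z)^[k] y -
            (⨅ i, M i).starProjection y‖)
        Filter.atTop (nhds 0) := by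
  set T := simultaneousProjection ω M
  have hT : T.IsPositive := isPositive_simultaneousProjection (fun i ↦ (hω i).le) hωsum.summable
  have hT' : (1 - T).IsPositive := by
    rw [one_sub_simultaneousProjection hωsum]
    exact isPositive_simultaneousProjection (fun i ↦ (hω i).le) hωsum.summable
  have hcoe : (fun z : H ↦ ∑' i, (ω i : 𝕜) • (M i).starProjection z) = T :=
    funext fun z ↦ (hasSum_simultaneousProjection_apply hωsum.summable z).tsum_eq
  have hproj : (⨅ i, M i).starProjection = (1 - T).ker.starProjection :=
    Submodule.starProjection_inj.2 (ker_one_sub_simultaneousProjection hω hωsum).symm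
  refine ⟨(1 - T).ker ⊔ ⨅ m : ℕ, ((1 - T) ^ m).range,
    dense_ker_sup_iInf_range_pow hT'.isSelfAdjoint.isStarNormal, fun y hy n ↦ ?_⟩
  rw [hcoe, hproj]
  simpa only [FunLike.coe_pow_eq_iterate] using
    tendsto_pow_mul_norm_pow_apply_sub_starProjection hT hT' hy n

/-- If `A_ω` is not closed in `H`, then there is a dense linear
subspace `Y ⊆ H` on which the simultaneous projection method converges
super-polynomially fast: `k^n ‖T_ω^k y − P_M y‖ → 0` for every `y ∈ Y` and `n ≥ 1`. -/
theorem stmt_18 {H : Type*} [NormedAddCommGroup H] [InnerProductSpace ℝ H] [CompleteSpace H]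
    {ι : Type*} [Countable ι] [Nonempty ι]
    (ω : ι → ℝ) (hω : ∀ i, 0 < ω i) (hωsum : HasSum ω 1)
    (M : ι → Submodule ℝ H) [∀ i, CompleteSpace (M i)]
    [CompleteSpace ↥(⨅ i, M i : Submodule ℝ H)]
    (hMnt : ∀ i, M i ≠ ⊥)
    (hnc : ¬ IsClosed { y : H | ∃ x : ι → H, (∀ i, x i ∈ (M i)ᗮ) ∧
      (Summable fun i => ω i * ‖x i‖ ^ 2) ∧ y = ∑' i, ω i • x i }) :
    ∃ Y : Submodule ℝ H, Dense (Y : Set H) ∧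
      ∀ y ∈ Y, ∀ n : ℕ, 1 ≤ n →
        Filter.Tendsto
          (fun k : ℕ => (k : ℝ) ^ n *
            ‖(fun z : H => ∑' i, ω i • ((Submodule.orthogonalProjectionOnto (M i) z : H)))^[k] y -
              (Submodule.orthogonalProjectionOnto (⨅ i, M i : Submodule ℝ H) y : H)‖)
          Filter.atTop (nhds 0) := by
  obtain ⟨Y, hY, hconv⟩ := stmt_18_general ω hω hωsum M
  exact ⟨Y, hY, fun y hy n _ ↦ hconv y hy n⟩
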